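/- Let I ⊆ R be a square-free monomial ideal with labeled hypergraph H(I) = (V, X, E, 𝓔). Suppose there exist vertices v_1,...,v_t ∈ V such that adding the singleton edges {v_1},...,{v_t} to 𝓔 yields a hypergraph with isolated open vertices. Then reg(R/I) ≤ |X| − |V| + t. -/

import Mathlib

/-!
Over all homological degrees at once, the Koszul complex of the variables is a differential `kos`
on functions `Finset σ → R`. As `kos` raises the degree of coefficients by one, the statement
`reg (R / I) < n` can be put without any bigrading (`Exact I n`): every cycle over `R / I` with
coefficients of degree at least `n` is a boundary.

The hypothesis says that the vertices outside `W` are either closed, hence have a private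
variable, or open and then pairwise coprime as monomials. For families of that shape
`reg (R / I) ≤ |X| - #{vertices outside W}` follows by removing one generator `f` at a time
(`exact_family`): the exact sequence `0 → R / (J : f) (-deg f) → R / J → R / (J + (f)) → 0` gives
`reg (R / (J + (f))) ≤ max (reg (R / J)) (reg (R / (J : f)) + deg f - 1)` (`Exact.cone`).
Deleting a generator with a private variable loses one variable and one generator, deleting one
of `W` loses nothing that is counted, and `J : f` is generated by the monomials `g / gcd (g, f)`,
which do not involve the `deg f` variables of `f` and keep their private variables and their
coprimality. Open generators are removed last, when they are coprime to all the others and so all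
their variables are private. The base case `I = 0` is the acyclicity of the Koszul complex of `R`
(`exact_vars`), which follows from the homotopy `kos_wedge` in any characteristic.
-/


/-!
Common setup: square-free monomial ideals in `R = K[A]` (here `MvPolynomial σ K`
with `σ` the finite alphabet `A`), encoded by the finite antichain `G` of
supports of their minimal monomial generators; the labeled hypergraph `H(I)`
of such an ideal, whose vertex set is (in bijection with) `G` and whose edge
labeled by a variable `a` is `E_a = { S ∈ G : a ∈ S }`; and Castelnuovo–Mumford
regularity and projective dimension of `R/I`, defined via graded Betti numbers
`β_{ij}(R/I) = dim_K Tor_i^R(R/I, K)_j`, which are computed from the Koszul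
complex of the variables tensored with `R/I`.
-/

open MvPolynomial Finset
open scoped Classical

namespace SqfreeHyp

variable (σ : Type) [Fintype σ] [LinearOrder σ] (K : Type) [Field K]

/-- The square-free monomial `∏_{a ∈ S} a`. -/
noncomputable def sqMon (S : Finset σ) : MvPolynomial σ K := ∏ a ∈ S, X a

/-- The square-free monomial ideal whose (minimal) monomial generators have
supports exactly the members of `G`. -/
noncomputable def monIdeal (G : Finset (Finset σ)) : Ideal (MvPolynomial σ K) :=
  Ideal.span ((fun S => sqMon σ K S) '' (G : Set (Finset σ)))

/-- `G` is an antichain under inclusion (= divisibility of the square-free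
monomials): the corresponding monomial generating set is minimal. -/
def MinGens (G : Finset (Finset σ)) : Prop := ∀ S ∈ G, ∀ T ∈ G, S ⊆ T → S = T

/-- `E_a`: the edge of the labeled hypergraph `H(I)` labeled by the variable `a`,
consisting of the (vertices corresponding to the) generators divisible by `a`. -/
def EdgeOf (G : Finset (Finset σ)) (a : σ) : Finset (Finset σ) :=
  G.filter (fun S => a ∈ S)

/-- The set `𝓔` of (nonempty) edges of the labeled hypergraph. -/
noncomputable def edgeSet (G : Finset (Finset σ)) : Finset (Finset (Finset σ)) :=
  (Finset.univ.image (EdgeOf σ G)).filter (· ≠ ∅)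

/-- `X`: the set of variables appearing among the generators (the labels). -/
def varsOf (G : Finset (Finset σ)) : Finset σ := G.biUnion id

/-- A vertex is closed if its singleton is an edge. -/
def Closed (G : Finset (Finset σ)) (v : Finset σ) : Prop :=
  ∃ a : σ, EdgeOf σ G a = {v}

/-- The neighbors `N_H(v)` of a vertex: the other vertices sharing an edge with `v`. -/
noncomputable def Neighbors (G : Finset (Finset σ)) (v : Finset σ) : Finset (Finset σ) :=
  G.filter (fun w => w ≠ v ∧ ∃ a : σ, v ∈ EdgeOf σ G a ∧ w ∈ EdgeOf σ G a)

/-- The open (= not closed) vertices. -/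
noncomputable def openVerts (G : Finset (Finset σ)) : Finset (Finset σ) :=
  G.filter (fun v => ¬ Closed σ G v)

/-- The minimal members of a family of supports (used to pass to the minimal
monomial generating sets of colon ideals and sums). -/
def minimalize (A : Finset (Finset σ)) : Finset (Finset σ) :=
  A.filter (fun S => ∀ T ∈ A, T ⊆ S → T = S)

/-- An edge is simple if it has at least two vertices and has no proper
subedge besides `∅`. -/
def SimpleEdge (G : Finset (Finset σ)) (F : Finset (Finset σ)) : Prop :=
  F ∈ edgeSet σ G ∧ 2 ≤ F.card ∧ ∀ F' ∈ edgeSet σ G, F' ⊆ F → F' = F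

/-- The set of simple edges. -/
noncomputable def simpleEdges (G : Finset (Finset σ)) : Finset (Finset (Finset σ)) :=
  (edgeSet σ G).filter (fun F => SimpleEdge σ G F)

/-- `H(I)` has isolated simple edges: every open vertex is contained in
exactly one simple edge. -/
def HasIsolatedSimpleEdges (G : Finset (Finset σ)) : Prop :=
  ∀ v ∈ G, ¬ Closed σ G v → ∃! F : Finset (Finset σ), SimpleEdge σ G F ∧ v ∈ F

/-! ### Regularity via graded Betti numbers.
`β_{ij}(R/I) = dim_K Tor_i^R(R/I,K)_j` where `Tor` is computed by the Koszul
complex on the variables of `R` tensored with `R/I`; its `i`-th term has basis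
indexed by `i`-element subsets of the variables, with coefficients in `R/I`. -/

/-- Index of the degree-`i` term of the Koszul complex. -/
abbrev KT (i : ℕ) : Type _ := {T : Finset σ // T.card = i}

/-- The Koszul differential on `K_•(x_a : a) ⊗ R/I`. -/
noncomputable def kd (I : Ideal (MvPolynomial σ K)) (i : ℕ)
    (c : KT σ i →₀ (MvPolynomial σ K ⧸ I)) :
    KT σ (i - 1) →₀ (MvPolynomial σ K ⧸ I) :=
  c.sum fun T m => ∑ a ∈ T.1.attach,
    ((-1 : ℤ) ^ ((T.1.filter (fun b => b < a.1)).card)) •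
      Finsupp.single
        (⟨T.1.erase a.1, by rw [Finset.card_erase_of_mem a.2, T.2]⟩ : KT σ (i - 1))
        ((X a.1 : MvPolynomial σ K) • m)

/-- `c` is homogeneous of internal degree `j` (each coefficient at a size-`i`
subset is the class of a homogeneous polynomial of degree `j - i`). -/
def IsHomogEl (I : Ideal (MvPolynomial σ K)) (i j : ℕ)
    (c : KT σ i →₀ (MvPolynomial σ K ⧸ I)) : Prop :=
  ∀ T : KT σ i, ∃ p : MvPolynomial σ K,
    p.IsHomogeneous (j - i) ∧ Ideal.Quotient.mk I p = c T

/-- The graded Betti number `β_{ij}(R/I)` is nonzero: there is a homogeneous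
cycle of internal degree `j` in homological degree `i` of the Koszul complex
tensored with `R/I` which is not a boundary. -/
def BettiNe (I : Ideal (MvPolynomial σ K)) (i j : ℕ) : Prop :=
  ∃ c : KT σ i →₀ (MvPolynomial σ K ⧸ I),
    IsHomogEl σ K I i j c ∧ kd σ K I i c = 0 ∧
    ∀ b : KT σ (i + 1) →₀ (MvPolynomial σ K ⧸ I), kd σ K I (i + 1) b ≠ c

/-- Castelnuovo–Mumford regularity of `R/I`: `max { j - i : β_{ij}(R/I) ≠ 0 }`. -/
noncomputable def reg (I : Ideal (MvPolynomial σ K)) : ℤ :=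
  sSup { d : ℤ | ∃ i j : ℕ, BettiNe σ K I i j ∧ d = (j : ℤ) - (i : ℤ) }

/-- Projective dimension of `R/I`: `max { i : β_{ij}(R/I) ≠ 0 for some j }`. -/
noncomputable def pdim (I : Ideal (MvPolynomial σ K)) : ℕ :=
  sSup { i : ℕ | ∃ j : ℕ, BettiNe σ K I i j }

end SqfreeHyp

open SqfreeHyp

namespace SqfreeHyp

section Koszul

set_option linter.unusedSectionVars false

variable {σ : Type} [Fintype σ] [LinearOrder σ] {K : Type} [Field K]

/-! ### The Koszul complex over the polynomial ring -/

/-- The sign `(-1) ^ #{b ∈ T : b < a}` of the term `X_a e_T` in the differential of `e_{T ∪ a}`. -/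
noncomputable def sg (K : Type) [Field K] (a : σ) (T : Finset σ) : MvPolynomial σ K :=
  (-1) ^ (T.filter (fun b => b < a)).card

theorem sg_mul_self (a : σ) (T : Finset σ) : sg K a T * sg K a T = 1 := by
  simp [sg, ← mul_pow]

theorem sg_insert {a b : σ} {T : Finset σ} (ha : a ∉ T) :
    sg K b (insert a T) = if a < b then - sg K b T else sg K b T := by
  unfold sg
  rw [Finset.filter_insert]
  split_ifs with h
  · rw [Finset.card_insert_of_notMem (by simp [ha]), pow_succ]; ring
  · rfl

theorem sg_insert_self (a : σ) (T : Finset σ) : sg K a (insert a T) = sg K a T := by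
  unfold sg
  rw [Finset.filter_insert, if_neg (lt_irrefl a)]

theorem sg_swap {a b : σ} {T : Finset σ} (ha : a ∉ T) (hb : b ∉ T) (hab : a ≠ b) :
    sg K a T * sg K b (insert a T) = - (sg K b T * sg K a (insert b T)) := by
  rw [sg_insert ha, sg_insert hb]
  rcases lt_or_gt_of_ne hab with h | h
  · rw [if_pos h, if_neg h.not_gt]; ring
  · rw [if_pos h, if_neg h.not_gt]; ring

/-- The Koszul differential of the variables over `R = K[σ]`, with all homological degrees
taken together: a chain is the function sending `T` to its coefficient at the basis element
`e_T`. -/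
noncomputable def kos : (Finset σ → MvPolynomial σ K) →ₗ[MvPolynomial σ K]
    (Finset σ → MvPolynomial σ K) where
  toFun c U := ∑ a ∈ Uᶜ, sg K a U * X a * c (insert a U)
  map_add' c d := by
    funext U; simp [mul_add, Finset.sum_add_distrib]
  map_smul' r c := by
    funext U; simp only [Pi.smul_apply, smul_eq_mul, RingHom.id_apply, Finset.mul_sum]
    exact Finset.sum_congr rfl fun a _ => by ring

theorem kos_apply (c : Finset σ → MvPolynomial σ K) (U : Finset σ) :
    kos c U = ∑ a ∈ Uᶜ, sg K a U * X a * c (insert a U) := rfl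

theorem kos_kos (c : Finset σ → MvPolynomial σ K) : kos (kos c) = 0 := by
  funext U
  simp only [kos_apply, Finset.mul_sum, Pi.zero_apply]
  rw [Finset.sum_sigma']
  refine Finset.sum_involution (fun p _ => ⟨p.2, p.1⟩) ?_ ?_ ?_ ?_
  · rintro ⟨a, b⟩ h
    simp only [Finset.mem_sigma, Finset.mem_compl, Finset.mem_insert, not_or] at h
    have := sg_swap (K := K) h.1 h.2.2 (Ne.symm h.2.1)
    rw [Finset.insert_comm b a U]
    linear_combination (X a * X b * c (insert a (insert b U))) * this
  · rintro ⟨a, b⟩ h _ h'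
    simp only [Finset.mem_sigma, Finset.mem_compl, Finset.mem_insert, not_or] at h
    simp only [Sigma.mk.injEq] at h'
    exact h.2.1 h'.1
  · rintro ⟨a, b⟩ h
    simp only [Finset.mem_sigma, Finset.mem_compl, Finset.mem_insert, not_or] at h ⊢
    exact ⟨h.2.2, Ne.symm h.2.1, h.1⟩
  · rintro ⟨a, b⟩ h
    rfl

/-- Exterior multiplication by the basis vector `e_a`. -/
noncomputable def wedge (a : σ) (c : Finset σ → MvPolynomial σ K) : Finset σ → MvPolynomial σ K :=
  fun T => if a ∈ T then sg K a T * c (T.erase a) else 0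

/-- Exterior multiplication by `e_a` is a homotopy from `X_a` to `0`, so each variable
annihilates Koszul homology. -/
theorem kos_wedge (a : σ) (c : Finset σ → MvPolynomial σ K) :
    kos (wedge a c) + wedge a (kos c) = (X a : MvPolynomial σ K) • c := by
  funext U
  simp only [Pi.add_apply, Pi.smul_apply, smul_eq_mul]
  by_cases ha : a ∈ U
  · obtain ⟨V, hV, rfl⟩ : ∃ V, a ∉ V ∧ U = insert a V :=
      ⟨U.erase a, by simp, by rw [Finset.insert_erase ha]⟩
    rw [wedge, if_pos ha, Finset.erase_insert hV, sg_insert_self, kos_apply, kos_apply]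
    have hc : Vᶜ = insert a (insert a V)ᶜ := by
      ext b; simp only [Finset.mem_compl, Finset.mem_insert]
      by_cases h : b = a
      · subst h; simpa using hV
      · simp [h]
    rw [hc, Finset.sum_insert (by simp), mul_add, Finset.mul_sum, add_left_comm,
      ← Finset.sum_add_distrib, Finset.sum_eq_zero, add_zero]
    · linear_combination (X a * c (insert a V)) * sg_mul_self (K := K) a V
    · intro b hb
      simp only [Finset.mem_compl, Finset.mem_insert, not_or] at hb
      rw [wedge, if_pos (by simp), Finset.insert_comm b a V,
        Finset.erase_insert (by simp [hV, Ne.symm hb.1]), sg_insert_self]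
      have := sg_swap (K := K) hV hb.2 (Ne.symm hb.1)
      have h2 := sg_mul_self (K := K) a V
      rw [sg_insert hV, sg_insert hb.2] at *
      rcases lt_or_gt_of_ne hb.1 with h | h
      · rw [if_neg h.not_gt, if_pos h]; ring
      · rw [if_neg h.not_gt, if_pos h]; ring
  · rw [wedge, if_neg ha, add_zero, kos_apply, Finset.sum_eq_single_of_mem a (by simpa using ha)]
    · rw [wedge, if_pos (by simp), Finset.erase_insert ha, sg_insert_self]
      linear_combination (X a * c U) * sg_mul_self (K := K) a U
    · intro b _ hb
      rw [wedge, if_neg (by simp [ha, Ne.symm hb]), mul_zero]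

theorem kos_mem {I : Ideal (MvPolynomial σ K)} {c : Finset σ → MvPolynomial σ K}
    (hc : ∀ T, c T ∈ I) (U : Finset σ) : kos c U ∈ I :=
  Ideal.sum_mem _ fun _ _ => I.mul_mem_left _ (hc _)

theorem wedge_mem {I : Ideal (MvPolynomial σ K)} {c : Finset σ → MvPolynomial σ K} (a : σ)
    (hc : ∀ T, c T ∈ I) (U : Finset σ) : wedge a c U ∈ I := by
  unfold wedge
  split_ifs
  · exact I.mul_mem_left _ (hc _)
  · exact I.zero_mem

/-! ### Regularity as acyclicity in high coefficient degree -/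

/-- The polynomials all of whose monomials have degree at least `n`. -/
noncomputable abbrev ord (σ K : Type) [Field K] (n : ℕ) : Ideal (MvPolynomial σ K) :=
  idealOfVars σ K ^ n

theorem kos_ord {n : ℕ} {c : Finset σ → MvPolynomial σ K}
    (hc : ∀ T, c T ∈ ord σ K n) (U : Finset σ) : kos c U ∈ ord σ K (n + 1) :=
  Ideal.sum_mem _ fun a _ => by
    rw [mul_assoc, ord, pow_succ']
    exact Ideal.mul_mem_left _ _ (Ideal.mul_mem_mul (Ideal.subset_span ⟨a, rfl⟩) (hc _))

/-- A Koszul cycle over `R / I` with coefficients of degree at least `n` is the boundary of a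
chain with coefficients of degree at least `n - 1`. As the coefficients of a homogeneous
element of homological degree `i` and internal degree `j` have degree `j - i`, this says that `reg (R / I) < n`. -/
def Exact (I : Ideal (MvPolynomial σ K)) (n : ℕ) : Prop :=
  ∀ c : Finset σ → MvPolynomial σ K, (∀ T, c T ∈ ord σ K n) → (∀ T, kos c T ∈ I) →
    ∃ b : Finset σ → MvPolynomial σ K, (∀ T, b T ∈ ord σ K (n - 1)) ∧ ∀ T, c T - kos b T ∈ I

theorem divMonomial_ord {n : ℕ} {p : MvPolynomial σ K} (hp : p ∈ ord σ K n) (s : σ →₀ ℕ) :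
    p.divMonomial s ∈ ord σ K (n - s.degree) := by
  rw [ord, mem_pow_idealOfVars_iff'] at hp ⊢
  intro x hx
  rw [coeff_divMonomial]
  apply hp
  rw [map_add]; omega

theorem monomial_mul_ord {n : ℕ} {p : MvPolynomial σ K} (hp : p ∈ ord σ K n) (s : σ →₀ ℕ) :
    monomial s 1 * p ∈ ord σ K (s.degree + n) := by
  rw [ord, pow_add]
  refine Ideal.mul_mem_mul ?_ hp
  rw [monomial_mem_pow_idealOfVars_iff _ _ one_ne_zero]

theorem ord_mono {m n : ℕ} (h : m ≤ n) {p : MvPolynomial σ K} (hp : p ∈ ord σ K n) :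
    p ∈ ord σ K m := Ideal.pow_le_pow_right h hp

/-- The regularity estimate coming from the exact sequence
`0 → (R / (J : f))(-deg f) → R / J → R / (J + (f)) → 0` for the monomial `f = X ^ s`; here `J'`
plays the role of `J : f` and `I` that of `J + (f)`. -/
theorem Exact.cone {I J J' : Ideal (MvPolynomial σ K)} {s : σ →₀ ℕ} {n : ℕ}
    (h1 : ∀ p, monomial s 1 * p ∈ J ↔ p ∈ J')
    (h2 : ∀ p ∈ I, p - monomial s 1 * (p.divMonomial s) ∈ J)
    (h3 : J ≤ I) (h4 : monomial s 1 ∈ I)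
    (hJ : Exact J n) (hJ' : Exact J' (n + 1 - s.degree)) : Exact I n := by
  intro c hc hcI
  set f : MvPolynomial σ K := monomial s 1 with hf
  -- A lift of the cycle `c` has `kos c = f • e + r` with `r` over `J`, and `e` is then a cycle
  -- over `R / J'` (the connecting map); it bounds, so `c` can be corrected to a cycle over `R / J`.
  let e : Finset σ → MvPolynomial σ K := fun T => (kos c T).divMonomial s
  let r : Finset σ → MvPolynomial σ K := kos c - f • e
  have hr : ∀ T, r T ∈ J := fun T => h2 _ (hcI T)
  have he : ∀ T, kos e T ∈ J' := by
    intro T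
    rw [← h1]
    have : kos r = - (f • kos e) := by
      simp only [r, map_sub, kos_kos, map_smul, zero_sub]
    have h := J.neg_mem (kos_mem hr T)
    rw [this] at h
    simpa using h
  obtain ⟨b, hb, hbe⟩ := hJ' e (fun T => divMonomial_ord (kos_ord hc T) s) he
  obtain ⟨h, hh, hhc⟩ := hJ (c - f • b)
    (fun T => Ideal.sub_mem _ (hc T) (ord_mono (by omega) (monomial_mul_ord (hb T) s)))
    (fun T => by
      have : kos (c - f • b) T = r T + f * (e T - kos b T) := by
        simp only [r, map_sub, map_smul, Pi.sub_apply, Pi.smul_apply, smul_eq_mul]; ring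
      rw [this]
      exact J.add_mem (hr T) ((h1 _).2 (hbe T)))
  refine ⟨h, hh, fun T => ?_⟩
  have : c T - kos h T = ((c - f • b) T - kos h T) + b T * f := by
    simp only [Pi.sub_apply, Pi.smul_apply, smul_eq_mul]; ring
  rw [this]
  exact I.add_mem (h3 (hhc T)) (I.mul_mem_left _ h4)

/-- If `X_a` is a nonzerodivisor on `R / J`, then acyclicity of the Koszul complex descends from
`I = J + (X_a)` to `J`: a cycle is homologous to a multiple of `X_a`, hence to zero. -/
theorem Exact.descend {I J : Ideal (MvPolynomial σ K)} {a : σ} {n : ℕ} (hn : 1 ≤ n)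
    (h1 : ∀ p, X a * p ∈ J ↔ p ∈ J)
    (h2 : ∀ p ∈ I, p - X a * (p.divMonomial (Finsupp.single a 1)) ∈ J)
    (h3 : J ≤ I) (hI : Exact I n) : Exact J n := by
  intro c hc hcJ
  obtain ⟨b, hb, hbc⟩ := hI c hc fun T => h3 (hcJ T)
  let e : Finset σ → MvPolynomial σ K :=
    fun T => (c T - kos b T).divMonomial (Finsupp.single a 1)
  let r : Finset σ → MvPolynomial σ K := c - kos b - (X a : MvPolynomial σ K) • e
  have hr : ∀ T, r T ∈ J := fun T => h2 _ (hbc T)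
  have heo : ∀ T, e T ∈ ord σ K (n - 1) := fun T => by
    have h := divMonomial_ord (Ideal.sub_mem _ (hc T) (ord_mono (by omega) (kos_ord hb T)))
      (Finsupp.single a 1)
    rwa [Finsupp.degree_single] at h
  have he : ∀ T, kos e T ∈ J := by
    intro T
    rw [← h1]
    have : kos c T - kos r T = X a * kos e T := by
      simp only [r, map_sub, kos_kos, map_smul, Pi.sub_apply, Pi.smul_apply, smul_eq_mul,
        Pi.zero_apply]
      ring
    rw [← this]
    exact J.sub_mem (hcJ T) (kos_mem hr T)
  refine ⟨b + wedge a e, fun T => Ideal.add_mem _ (hb T) (wedge_mem a heo T), fun T => ?_⟩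
  have h := congrFun (kos_wedge a e) T
  simp only [Pi.add_apply, Pi.smul_apply, smul_eq_mul] at h
  have : c T - kos (b + wedge a e) T = r T + wedge a (kos e) T := by
    simp only [r, map_add, Pi.add_apply, Pi.sub_apply, Pi.smul_apply, smul_eq_mul]
    linear_combination -h
  rw [this]
  exact J.add_mem (hr T) (wedge_mem a he T)

/-! ### Square-free monomial ideals and their colons -/

/-- The exponent vector of the square-free monomial with support `S`. -/
noncomputable def exps (S : Finset σ) : σ →₀ ℕ := ∑ a ∈ S, Finsupp.single a 1

theorem exps_apply (S : Finset σ) (a : σ) : exps S a = if a ∈ S then 1 else 0 := by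
  simp [exps, Finsupp.finsetSum_apply, Finsupp.single_apply]

theorem exps_le (S : Finset σ) (m : σ →₀ ℕ) : exps S ≤ m ↔ S ⊆ m.support := by
  constructor
  · intro h a ha
    have := h a
    rw [exps_apply, if_pos ha] at this
    rw [Finsupp.mem_support_iff]; omega
  · intro h a
    rw [exps_apply]
    split_ifs with ha
    · have := Finsupp.mem_support_iff.1 (h ha); omega
    · exact Nat.zero_le _

theorem degree_exps (S : Finset σ) : (exps S).degree = S.card := by
  simp [exps, map_sum]

theorem sqMon_eq (S : Finset σ) : sqMon σ K S = monomial (exps S) 1 := by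
  rw [exps, monomial_sum_one]; rfl

theorem mem_monIdeal {G : Finset (Finset σ)} {p : MvPolynomial σ K} :
    p ∈ monIdeal σ K G ↔ ∀ m, coeff m p ≠ 0 → ∃ S ∈ G, S ⊆ m.support := by
  have h : (fun S => sqMon σ K S) '' (G : Set (Finset σ)) =
      (fun s => monomial s (1 : K)) '' (exps '' (G : Set (Finset σ))) := by
    rw [Set.image_image]
    exact Set.image_congr fun S _ => sqMon_eq S
  rw [monIdeal, h, mem_ideal_span_monomial_image]
  simp [exps_le]

/-- The colon of a square-free monomial ideal by the monomial with support `S` is obtained by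
removing `S` from the supports of the generators. -/
theorem colon_monIdeal {ι : Type} (A : Finset ι) (g : ι → Finset σ) (S : Finset σ)
    (p : MvPolynomial σ K) :
    monomial (exps S) 1 * p ∈ monIdeal σ K (A.image g) ↔
      p ∈ monIdeal σ K (A.image fun j => g j \ S) := by
  simp only [mem_monIdeal, Finset.exists_mem_image]
  constructor
  · intro h m hm
    obtain ⟨j, hj, hs⟩ := h (exps S + m) (by rwa [coeff_monomial_mul, one_mul])
    refine ⟨j, hj, fun a ha => ?_⟩
    rw [Finset.mem_sdiff] at ha
    have := Finsupp.mem_support_iff.1 (hs ha.1)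
    rw [Finsupp.add_apply, exps_apply, if_neg ha.2] at this
    rw [Finsupp.mem_support_iff]; omega
  · intro h m hm
    rw [coeff_monomial_mul'] at hm
    split_ifs at hm with hle
    · rw [one_mul] at hm
      obtain ⟨j, hj, hs⟩ := h _ hm
      refine ⟨j, hj, fun a ha => ?_⟩
      by_cases haS : a ∈ S
      · exact (exps_le _ _).1 hle haS
      · have := Finsupp.mem_support_iff.1 (hs (Finset.mem_sdiff.2 ⟨ha, haS⟩))
        rw [Finsupp.tsub_apply] at this
        rw [Finsupp.mem_support_iff]; omega
    · exact absurd rfl hm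

/-- If the generators indexed by `A` are `g i` and those indexed by `B`, a member of the ideal of
`A` minus its part divisible by `g i` lies in the ideal of `B`. -/
theorem sub_divMonomial_mem {ι : Type} {A B : Finset ι} {g : ι → Finset σ} {i : ι}
    (hA : ∀ j ∈ A, j = i ∨ j ∈ B) {p : MvPolynomial σ K} (hp : p ∈ monIdeal σ K (A.image g)) :
    p - monomial (exps (g i)) 1 * p.divMonomial (exps (g i)) ∈ monIdeal σ K (B.image g) := by
  have : p - monomial (exps (g i)) 1 * p.divMonomial (exps (g i)) =
      p.modMonomial (exps (g i)) := by
    rw [sub_eq_iff_eq_add']; exact (divMonomial_add_modMonomial p _).symm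
  rw [this, mem_monIdeal]
  rw [mem_monIdeal] at hp
  intro m hm
  by_cases hle : exps (g i) ≤ m
  · exact absurd (coeff_modMonomial_of_le p hle) hm
  · rw [coeff_modMonomial_of_not_le p hle] at hm
    obtain ⟨S, hS, hSm⟩ := hp m hm
    obtain ⟨j, hj, rfl⟩ := Finset.mem_image.1 hS
    rcases hA j hj with rfl | hjB
    · exact absurd ((exps_le _ _).2 hSm) hle
    · exact ⟨g j, Finset.mem_image_of_mem _ hjB, hSm⟩

theorem monIdeal_mono {G H : Finset (Finset σ)} (h : G ⊆ H) :
    monIdeal σ K G ≤ monIdeal σ K H :=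
  Ideal.span_mono (Set.image_mono (by exact_mod_cast h))

theorem monomial_mem {G : Finset (Finset σ)} {S : Finset σ} (h : S ∈ G) :
    monomial (exps S) 1 ∈ monIdeal σ K G :=
  Ideal.subset_span ⟨S, h, sqMon_eq S⟩

theorem Exact.of_mem {I : Ideal (MvPolynomial σ K)} {n : ℕ}
    (h : ∀ p ∈ ord σ K n, p ∈ I) : Exact I n := fun c hc _ =>
  ⟨0, fun _ => Ideal.zero_mem _, fun T => by simpa using h _ (hc T)⟩

/-- `R / (X_a : a ∈ V)` has regularity `0`, by descending induction on `V` from the residue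
field. -/
theorem exact_vars {n : ℕ} (hn : 1 ≤ n) (V : Finset σ) :
    Exact (monIdeal σ K (V.image fun a => {a})) n := by
  induction hk : Vᶜ.card generalizing V with
  | zero =>
    have hV : V = Finset.univ := by simpa using hk
    subst hV
    refine Exact.of_mem fun p hp => mem_monIdeal.2 fun m hm => ?_
    have hm0 : m ≠ 0 := by
      rintro rfl
      rw [ord, mem_pow_idealOfVars_iff'] at hp
      exact hm (hp 0 (by rw [map_zero]; omega))
    obtain ⟨a, ha⟩ := Finsupp.support_nonempty_iff.2 hm0
    exact ⟨{a}, by simp, by simpa using ha⟩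
  | succ k ih =>
    obtain ⟨a, ha⟩ : Vᶜ.Nonempty := Finset.card_pos.1 (by omega)
    have ha' : a ∉ V := by simpa using ha
    have hX : (X a : MvPolynomial σ K) = monomial (exps {a}) 1 := by simp [exps, X]
    have hs : Finsupp.single a 1 = exps ({a} : Finset σ) := by simp [exps]
    refine Exact.descend (a := a) hn (I := monIdeal σ K ((insert a V).image fun a => {a}))
      ?_ ?_ ?_ (ih _ ?_)
    · intro p
      rw [hX, colon_monIdeal]
      have : V.image (fun b => ({b} : Finset σ) \ {a}) = V.image fun b => {b} := by
        refine Finset.image_congr fun b hb => ?_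
        refine Finset.sdiff_eq_self_of_disjoint (Finset.disjoint_singleton.2 ?_)
        rintro rfl
        exact ha' hb
      rw [this]
    · intro p hp
      rw [hX, hs]
      exact sub_divMonomial_mem (g := fun b => ({b} : Finset σ))
        (fun j hj => Finset.mem_insert.1 hj) hp
    · exact monIdeal_mono (Finset.image_subset_image (Finset.subset_insert _ _))
    · rw [Finset.compl_insert, Finset.card_erase_of_mem ha, hk]; rfl

/-! ### The bound for families of generators -/

/-- The regularity bound for a family `g` of square-free monomials supported on `Y`, not
necessarily minimal or distinct. A generator marked `c` has a private variable, those marked `o`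
are pairwise coprime, and unmarked ones are arbitrary; the conclusion says
`reg (R / I) ≤ |Y| - #{marked generators}`. The class of such families is closed under deleting
a generator and taking the colon by it. Generators not marked `o` are deleted first; once only
coprime generators are left, each variable is private. -/
theorem exact_family {ι : Type} (c o : ι → Prop) (A : Finset ι) (g : ι → Finset σ)
    (Y : Finset σ) (n : ℕ) (hY : ∀ i ∈ A, g i ⊆ Y)
    (hc : ∀ i ∈ A, c i → ∃ a ∈ g i, ∀ j ∈ A, j ≠ i → a ∉ g j)
    (ho : ∀ i ∈ A, ∀ j ∈ A, o i → o j → i ≠ j → Disjoint (g i) (g j))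
    (hn : Y.card + 1 ≤ n + (A.filter fun i => c i ∨ o i).card) :
    Exact (monIdeal σ K (A.image g)) n := by
  induction A using Finset.strongInduction generalizing g Y n with
  | H A ih =>
  rcases A.eq_empty_or_nonempty with rfl | hne
  · rw [Finset.filter_empty, Finset.card_empty] at hn
    simpa using exact_vars (K := K) (by omega : 1 ≤ n) (∅ : Finset σ)
  by_cases hemp : ∃ i ∈ A, g i = ∅
  · obtain ⟨i, hi, h0⟩ := hemp
    refine Exact.of_mem fun p _ => mem_monIdeal.2 fun m _ => ?_
    exact ⟨g i, Finset.mem_image_of_mem _ hi, by simp [h0]⟩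
  push Not at hemp
  obtain ⟨i, hi, hpriv⟩ : ∃ i ∈ A, c i ∨ o i → ∃ a ∈ g i, ∀ j ∈ A, j ≠ i → a ∉ g j := by
    by_cases h : ∃ i ∈ A, ¬ o i
    · obtain ⟨i, hi, hoi⟩ := h
      exact ⟨i, hi, fun h => hc i hi (h.resolve_right hoi)⟩
    · push Not at h
      obtain ⟨i, hi⟩ := hne
      obtain ⟨a, ha⟩ := hemp i hi
      exact ⟨i, hi, fun _ => ⟨a, ha, fun j hj hji haj =>
        Finset.disjoint_left.1 (ho j hj i hi (h j hj) (h i hi) hji) haj ha⟩⟩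
  have hlt : A.erase i ⊂ A := Finset.erase_ssubset hi
  have hsub := hlt.subset
  obtain ⟨Y', hY', hcard⟩ : ∃ Y' : Finset σ, (∀ j ∈ A.erase i, g j ⊆ Y') ∧
      Y'.card + (A.filter fun i => c i ∨ o i).card ≤
        Y.card + ((A.erase i).filter fun i => c i ∨ o i).card := by
    rw [Finset.filter_erase]
    by_cases hm : c i ∨ o i
    · obtain ⟨a, ha, hp⟩ := hpriv hm
      refine ⟨Y.erase a, fun j hj => ?_, ?_⟩
      · rw [Finset.mem_erase] at hj
        exact Finset.subset_erase.2 ⟨hY j hj.2, hp j hj.2 hj.1⟩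
      · have h1 := Finset.card_erase_add_one (hY i hi ha)
        have h2 := Finset.card_erase_add_one
          (Finset.mem_filter.2 ⟨hi, hm⟩ : i ∈ A.filter fun i => c i ∨ o i)
        omega
    · refine ⟨Y, fun j hj => hY j (hsub hj), ?_⟩
      rw [Finset.erase_eq_of_notMem (by simp [hm])]
  have hA : ∀ j ∈ A, j = i ∨ j ∈ A.erase i := fun j hj => by
    by_cases h : j = i
    · exact Or.inl h
    · exact Or.inr (Finset.mem_erase.2 ⟨h, hj⟩)
  refine Exact.cone (s := exps (g i)) (colon_monIdeal (A.erase i) g (g i))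
    (fun p hp => sub_divMonomial_mem hA hp) (monIdeal_mono (Finset.image_subset_image hsub))
    (monomial_mem (Finset.mem_image_of_mem g hi)) ?_ ?_
  · refine ih _ hlt g Y' n hY' (fun j hj hcj => ?_)
      (fun j hj k hk => ho j (hsub hj) k (hsub hk)) (by omega)
    obtain ⟨a, ha, hp⟩ := hc j (hsub hj) hcj
    exact ⟨a, ha, fun k hk => hp k (hsub hk)⟩
  · refine ih _ hlt (fun j => g j \ g i) (Y \ g i) _
      (fun j hj => Finset.sdiff_subset_sdiff (hY j (hsub hj)) le_rfl) (fun j hj hcj => ?_)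
      (fun j hj k hk h1 h2 h3 => (ho j (hsub hj) k (hsub hk) h1 h2 h3).mono
        Finset.sdiff_subset Finset.sdiff_subset) ?_
    · obtain ⟨a, ha, hp⟩ := hc j (hsub hj) hcj
      refine ⟨a, Finset.mem_sdiff.2 ⟨ha, hp i hi (Finset.ne_of_mem_erase hj).symm⟩,
        fun k hk hkj hak => hp k (hsub hk) hkj (Finset.mem_sdiff.1 hak).1⟩
    · have h1 := Finset.card_sdiff_add_card_eq_card (hY i hi)
      have h2 : (A.filter fun i => c i ∨ o i).card ≤
          ((A.erase i).filter fun i => c i ∨ o i).card + 1 := by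
        rw [Finset.filter_erase]
        have := Finset.pred_card_le_card_erase (s := A.filter fun i => c i ∨ o i) (a := i)
        omega
      rw [degree_exps]
      omega

/-! ### Comparison with the graded Betti numbers -/

/-- On chains concentrated in homological degree `i`, the differential `kd` over `R / I` is
induced by `kos`. -/
theorem kd_apply (I : Ideal (MvPolynomial σ K)) (i : ℕ)
    (c : KT σ i →₀ (MvPolynomial σ K ⧸ I)) (p : Finset σ → MvPolynomial σ K)
    (hp : ∀ T : KT σ i, Ideal.Quotient.mk I (p T.1) = c T)
    (U : KT σ (i - 1)) (hU : U.1.card + 1 = i) :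
    kd σ K I i c U = Ideal.Quotient.mk I (kos p U.1) := by
  let F : Finset σ → σ → MvPolynomial σ K ⧸ I := fun T a =>
    if T.erase a = U.1 then Ideal.Quotient.mk I (sg K a T * X a * p T) else 0
  have h1 : kd σ K I i c U = ∑ T : KT σ i, ∑ a ∈ T.1, F T.1 a := by
    rw [kd, Finsupp.sum_fintype _ _ (fun T => by simp), Finsupp.finsetSum_apply]
    refine Finset.sum_congr rfl fun T _ => ?_
    rw [Finsupp.finsetSum_apply, ← Finset.sum_attach T.1]
    refine Finset.sum_congr rfl fun a _ => ?_
    rw [Finsupp.smul_apply, Finsupp.single_apply, ← hp T]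
    simp only [F, Subtype.ext_iff]
    split_ifs with h
    · rw [mul_assoc, map_mul, sg, map_pow, map_neg, map_one, zsmul_eq_mul, Int.cast_pow,
        Int.cast_neg, Int.cast_one]
      rfl
    · rw [smul_zero]
  rw [h1, kos_apply, map_sum]
  have h2 : ∀ T : KT σ i, ∑ a ∈ T.1, F T.1 a = ∑ a, if a ∈ T.1 then F T.1 a else 0 :=
    fun T => by simp
  simp only [h2]
  rw [Finset.sum_comm, ← Finset.sum_subset (Finset.subset_univ U.1ᶜ)]
  · refine Finset.sum_congr rfl fun a ha => ?_
    have ha' : a ∉ U.1 := by simpa using ha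
    rw [Finset.sum_eq_single_of_mem
      (⟨insert a U.1, by rw [Finset.card_insert_of_notMem ha', hU]⟩ : KT σ i) (Finset.mem_univ _)]
    · simp only [F]
      rw [if_pos (by simp), if_pos (Finset.erase_insert ha'), sg_insert_self]
    · intro T _ hT
      by_cases haT : a ∈ T.1
      · rw [if_pos haT]
        refine if_neg fun h => hT (Subtype.ext ?_)
        simp only
        rw [← h, Finset.insert_erase haT]
      · rw [if_neg haT]
  · intro a _ ha
    have ha' : a ∈ U.1 := by simpa using ha
    refine Finset.sum_eq_zero fun T _ => ?_
    split_ifs with haT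
    · exact if_neg fun h => by rw [← h] at ha'; simp at ha'
    · rfl

/-- Lifting a cycle over `R / I` to `R` turns `Exact I n` into vanishing of Betti numbers. -/
theorem lt_of_bettiNe {I : Ideal (MvPolynomial σ K)} {n i j : ℕ} (hI : Exact I n)
    (h : BettiNe σ K I i j) : j - i < n := by
  by_contra! hle
  obtain ⟨c, hc, hcyc, hnb⟩ := h
  choose q hq hqc using hc
  let p : Finset σ → MvPolynomial σ K := fun T => if h : T.card = i then q ⟨T, h⟩ else 0
  have hpT : ∀ T : KT σ i, p T.1 = q T := fun T => dif_pos T.2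
  have hp : ∀ T : KT σ i, Ideal.Quotient.mk I (p T.1) = c T := fun T => by rw [hpT, hqc]
  have hp0 : ∀ T : Finset σ, T.card ≠ i → p T = 0 := fun T h => dif_neg h
  obtain ⟨b, -, hb⟩ := hI p
    (fun T => by
      by_cases hT : T.card = i
      · rw [hpT ⟨T, hT⟩, ord, mem_pow_idealOfVars_iff']
        exact fun x hx => (hq ⟨T, hT⟩).coeff_eq_zero (by omega)
      · rw [hp0 T hT]; exact Ideal.zero_mem _)
    (fun U => by
      by_cases hU : U.card + 1 = i
      · have h := kd_apply I i c p hp ⟨U, by omega⟩ hU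
        rw [hcyc, Finsupp.zero_apply] at h
        exact Ideal.Quotient.eq_zero_iff_mem.1 h.symm
      · rw [kos_apply, Finset.sum_eq_zero fun a ha => ?_]
        · exact I.zero_mem
        · rw [hp0 _ (by rwa [Finset.card_insert_of_notMem (by simpa using ha)]), mul_zero])
  refine hnb (Finsupp.equivFunOnFinite.symm fun T => Ideal.Quotient.mk I (b T.1)) ?_
  ext U
  rw [kd_apply I (i + 1) _ b (fun T => rfl) U (by have := U.2; omega)]
  exact (Ideal.Quotient.eq.2 (hb U.1)).symm.trans (hp U)

end Koszul

end SqfreeHyp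

/-- Theorem `Pfill`: if adding the singleton edges
`{v} (v ∈ W)` to the labeled hypergraph of `I` (equivalently, declaring the
vertices of `W` closed) produces a hypergraph with isolated open vertices,
then `reg(R/I) ≤ |X| − |V| + t` where `t = |W|`. -/
theorem stmt_11 (σ : Type) [Fintype σ] [LinearOrder σ] (K : Type) [Field K]
    (G : Finset (Finset σ)) (hmin : MinGens σ G) (hne : ∀ S ∈ G, S.Nonempty)
    (W : Finset (Finset σ)) (hW : W ⊆ G)
    (hfill : ∀ v ∈ G, ¬ (Closed σ G v ∨ v ∈ W) →
      ∀ w ∈ Neighbors σ G v, Closed σ G w ∨ w ∈ W) :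
    reg σ K (monIdeal σ K G) ≤
      ((varsOf σ G).card : ℤ) - (G.card : ℤ) + (W.card : ℤ) := by
  have hns : ∀ v, v ∉ W → Closed σ G v → v ∈ G → ∃ a ∈ v, ∀ w ∈ G, w ≠ v → a ∉ w := by
    intro v _ ⟨a, ha⟩ hv
    have h : ∀ w, w ∈ G ∧ a ∈ w ↔ w = v := fun w => by
      rw [← Finset.mem_singleton, ← ha]; simp [EdgeOf]
    exact ⟨a, ((h v).2 rfl).2, fun w hw hwv haw => hwv ((h w).1 ⟨hw, haw⟩)⟩
  have hdis : ∀ v ∈ G, ∀ w ∈ G, (v ∉ W ∧ ¬ Closed σ G v) → (w ∉ W ∧ ¬ Closed σ G w) → v ≠ w →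
      Disjoint v w := by
    intro v hv w hw h1 h2 hvw
    rw [Finset.disjoint_left]
    intro a hav haw
    have := hfill v hv (by tauto) w (by
      simp only [Neighbors, EdgeOf, Finset.mem_filter]
      exact ⟨hw, hvw.symm, a, ⟨hv, hav⟩, hw, haw⟩)
    tauto
  have hsub : ∀ v ∈ G, v ⊆ varsOf σ G := fun v hv => Finset.subset_biUnion_of_mem id hv
  have hcardW : (G \ W).card + W.card = G.card := Finset.card_sdiff_add_card_eq_card hW
  rcases Set.eq_empty_or_nonempty
    {d : ℤ | ∃ i j : ℕ, BettiNe σ K (monIdeal σ K G) i j ∧ d = (j : ℤ) - (i : ℤ)} with h0 | h0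
  · -- Here `reg` takes the junk value `0`, so an injection of `G \ W` into the variables is
    -- needed: choose the private variable of a closed vertex, any variable of an open one.
    have hch : ∀ v : Finset σ, ∃ a : Option σ, v ∈ G \ W → ∃ x ∈ v, a = some x ∧
        (Closed σ G v → ∀ w ∈ G, w ≠ v → x ∉ w) := by
      intro v
      by_cases hv : v ∈ G \ W
      · rw [Finset.mem_sdiff] at hv
        by_cases hcl : Closed σ G v
        · obtain ⟨x, hx, hp⟩ := hns v hv.2 hcl hv.1
          exact ⟨some x, fun _ => ⟨x, hx, rfl, fun _ => hp⟩⟩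
        · obtain ⟨x, hx⟩ := hne v hv.1
          exact ⟨some x, fun _ => ⟨x, hx, rfl, fun h => absurd h hcl⟩⟩
      · exact ⟨none, fun h => absurd h hv⟩
    choose f hf using hch
    have hle : (G \ W).card ≤ ((varsOf σ G).image some).card := by
      refine Finset.card_le_card_of_injOn f (fun v hv => ?_) fun v hv w hw hvw => ?_
      · obtain ⟨x, hx, hfx, -⟩ := hf v hv
        rw [hfx]
        exact Finset.mem_coe.2
          (Finset.mem_image_of_mem _ (hsub v (Finset.mem_sdiff.1 hv).1 hx))
      · obtain ⟨x, hx, hfx, hxp⟩ := hf v hv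
        obtain ⟨y, hy, hfy, hyp⟩ := hf w hw
        have hxy : x = y := Option.some_injective _ (by rw [← hfx, ← hfy, hvw])
        subst hxy
        have hv' := Finset.mem_sdiff.1 hv
        have hw' := Finset.mem_sdiff.1 hw
        by_contra hne'
        by_cases hcv : Closed σ G v
        · exact hxp hcv w hw'.1 (Ne.symm hne') hy
        by_cases hcw : Closed σ G w
        · exact hyp hcw v hv'.1 hne' hx
        exact Finset.disjoint_left.1
          (hdis v hv'.1 w hw'.1 ⟨hv'.2, hcv⟩ ⟨hw'.2, hcw⟩ hne') hx hy
    rw [Finset.card_image_of_injective _ (Option.some_injective _)] at hle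
    rw [reg, h0, Int.csSup_empty]
    omega
  · refine csSup_le h0 ?_
    rintro d ⟨i, j, hij, rfl⟩
    have hex := exact_family (K := K) (fun v => v ∉ W ∧ Closed σ G v)
      (fun v => v ∉ W ∧ ¬ Closed σ G v) G id (varsOf σ G)
      ((varsOf σ G).card + 1 - (G \ W).card) hsub (fun v hv h => hns v h.1 h.2 hv) hdis (by
        refine le_trans (b := (varsOf σ G).card + 1 - (G \ W).card + (G \ W).card) (by omega)
          (Nat.add_le_add_left (Finset.card_le_card fun v hv => ?_) _)
        rw [Finset.mem_sdiff] at hv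
        exact (@Finset.mem_filter _ _ (_) _ _).2 ⟨hv.1, by tauto⟩)
    rw [Finset.image_id] at hex
    have := lt_of_bettiNe hex hij
    omega
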